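/- Let A be a nonzero graded algebra that is extremal. Then 0 < r(A) < ∞. -/

import Mathlib

open scoped ENNReal NNReal
open PowerSeries

noncomputable section

/-- The degree-`n` homogeneous component of the free algebra `k⟨X⟩`
(standard grading: each generator has degree 1). -/
def freeDeg (k : Type) [Field k] (X : Type) (n : ℕ) : Submodule k (FreeAlgebra k X) :=
  (Submodule.span k (Set.range (FreeAlgebra.ι k)) : Submodule k (FreeAlgebra k X)) ^ n

/-- The two-sided ideal generated by a set `S`, as a `k`-submodule. -/
def idealGen (k : Type) [Field k] {A : Type} [Ring A] [Algebra k A] (S : Set A) :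
    Submodule k A :=
  Submodule.span k {x : A | ∃ a b : A, ∃ s ∈ S, x = a * s * b}

/-- The dimension of the `n`-th component of the quotient of a graded algebra
(with components `𝒜`) by a homogeneous ideal `I`, i.e. `dim (𝒜 n / (I ∩ 𝒜 n))`. -/
def quotDim (k : Type) [Field k] {A : Type} [Ring A] [Algebra k A]
    (𝒜 : ℕ → Submodule k A) (I : Submodule k A) (n : ℕ) : ℕ :=
  Module.finrank k (↥(𝒜 n) ⧸ (I.comap (𝒜 n).subtype))

/-- The radius of convergence of the power series `Σ a_n t^n`, as an element of `[0,∞]`. -/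
def hradius (a : ℕ → ℝ) : ℝ≥0∞ :=
  ⨆ (r : ℝ≥0) (_ : Summable fun n => |a n| * (r : ℝ) ^ n), (r : ℝ≥0∞)

end
noncomputable section

/-- A `k`-submodule which is a two-sided ideal. -/
def IsTwoSidedSub {k A : Type} [Field k] [Ring A] [Algebra k A] (I : Submodule k A) : Prop :=
  ∀ a : A, ∀ x ∈ I, a * x ∈ I ∧ x * a ∈ I

/-- A submodule is homogeneous (w.r.t. the grading `𝒜`) if it is closed under taking
homogeneous components. -/
def IsHomogSub {k A : Type} [Field k] [Ring A] [Algebra k A]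
    (𝒜 : ℕ → Submodule k A) [GradedAlgebra 𝒜] (I : Submodule k A) : Prop :=
  ∀ x ∈ I, ∀ n, (DirectSum.decompose 𝒜 x n : A) ∈ I

/-- A graded algebra is extremal if every quotient by a nonzero homogeneous two-sided
ideal has strictly larger radius of convergence of its Hilbert series. -/
def Extremal {k A : Type} [Field k] [Ring A] [Algebra k A]
    (𝒜 : ℕ → Submodule k A) [GradedAlgebra 𝒜] : Prop :=
  ∀ I : Submodule k A, IsTwoSidedSub I → IsHomogSub 𝒜 I → I ≠ ⊥ →
    hradius (fun n => (Module.finrank k (𝒜 n) : ℝ)) <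
      hradius (fun n => (quotDim k 𝒜 I n : ℝ))

end

/-!
For a homogeneous `x` of degree `d`, the two-sided ideal `I` generated by `x` satisfies
`I ∩ A_n = ∑_{i + d + j = n} A_i x A_j`. Hence `A(t) ≤ (A/I)(t) + t ^ d * A(t) ^ 2` holds
coefficientwise. When `d ≥ 1` and `(A/I)(t)` has a positive radius of convergence, this bounds the
partial sums of `A(t)` for small `t > 0` by induction, so that `r(A) > 0`. Extremality applied to
the ideal `A` itself, whose quotient is zero, gives `r(A) < ∞`. An element `x ≠ 0` of positive
degree exists because otherwise `A(t)` would be a constant, with infinite radius of convergence.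
-/

open Finset Module

section Radius

lemma hradius_pos_iff {a : ℕ → ℝ} :
    0 < hradius a ↔ ∃ t : ℝ, 0 < t ∧ Summable fun n => |a n| * t ^ n := by
  simp only [hradius, lt_iSup_iff, ENNReal.coe_pos]
  constructor
  · rintro ⟨r, hsum, hr⟩
    exact ⟨r, hr, hsum⟩
  · rintro ⟨t, ht, hsum⟩
    exact ⟨⟨t, ht.le⟩, hsum, ht⟩

lemma hradius_eq_top_of_hasFiniteSupport {a : ℕ → ℝ} (ha : a.HasFiniteSupport) :
    hradius a = ⊤ := by
  refine ENNReal.eq_top_of_forall_nnreal_le fun r => le_iSup₂_of_le r ?_ le_rfl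
  exact summable_of_hasFiniteSupport <| ha.subset fun n hn h => hn (by simp [h])

lemma sum_range_sum_antidiagonal_mul_le_sq {R : Type*} [CommSemiring R] [PartialOrder R]
    [IsOrderedRing R] {b : ℕ → R} (hb : ∀ n, 0 ≤ b n) (N : ℕ) :
    ∑ n ∈ range N, ∑ p ∈ antidiagonal n, b p.1 * b p.2 ≤ (∑ n ∈ range N, b n) ^ 2 := by
  simp only [Nat.sum_antidiagonal_eq_sum_range_succ (fun i j => b i * b j)]
  rw [sum_range_diag_flip N fun i j => b i * b j, sq, sum_mul_sum]
  exact sum_le_sum fun i _ => sum_le_sum_of_subset_of_nonneg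
    (range_subset_range.2 (Nat.sub_le N i)) fun j _ _ => mul_nonneg (hb i) (hb j)

variable {a q : ℕ → ℝ} {d : ℕ}

lemma sum_range_mul_pow_le_of_le_add_convolution (ha : ∀ n, 0 ≤ a n)
    (hlow : ∀ n < d, a n ≤ q n)
    (hrec : ∀ n, a (d + n) ≤ q (d + n) + ∑ p ∈ antidiagonal n, a p.1 * a p.2)
    {t : ℝ} (ht : 0 ≤ t) (N : ℕ) :
    ∑ n ∈ range (d + N), a n * t ^ n ≤
      ∑ n ∈ range (d + N), q n * t ^ n + t ^ d * (∑ n ∈ range N, a n * t ^ n) ^ 2 := by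
  have hshift (n : ℕ) : a (d + n) * t ^ (d + n) ≤ q (d + n) * t ^ (d + n) +
      t ^ d * ∑ p ∈ antidiagonal n, (a p.1 * t ^ p.1) * (a p.2 * t ^ p.2) := by
    have hconv : ∑ p ∈ antidiagonal n, (a p.1 * t ^ p.1) * (a p.2 * t ^ p.2) =
        (∑ p ∈ antidiagonal n, a p.1 * a p.2) * t ^ n := by
      rw [sum_mul]
      refine sum_congr rfl fun p hp => ?_
      rw [← mem_antidiagonal.1 hp]
      ring
    calc a (d + n) * t ^ (d + n)
        ≤ (q (d + n) + ∑ p ∈ antidiagonal n, a p.1 * a p.2) * t ^ (d + n) := by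
          gcongr
          exact hrec n
      _ = _ := by
          rw [hconv]
          ring
  have hsq := sum_range_sum_antidiagonal_mul_le_sq
    (fun n => mul_nonneg (ha n) (pow_nonneg ht n)) N
  calc ∑ n ∈ range (d + N), a n * t ^ n
      ≤ ∑ n ∈ range d, q n * t ^ n + ∑ n ∈ range N, (q (d + n) * t ^ (d + n) +
          t ^ d * ∑ p ∈ antidiagonal n, (a p.1 * t ^ p.1) * (a p.2 * t ^ p.2)) := by
        rw [sum_range_add]
        gcongr with n hn n
        · exact hlow n (mem_range.1 hn)
        · exact hshift n
    _ = ∑ n ∈ range (d + N), q n * t ^ n + t ^ d *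
          ∑ n ∈ range N, ∑ p ∈ antidiagonal n, (a p.1 * t ^ p.1) * (a p.2 * t ^ p.2) := by
        rw [sum_range_add, sum_add_distrib, mul_sum, add_assoc]
    _ ≤ _ := by gcongr

lemma hradius_pos_of_le_add_convolution (hd : d ≠ 0) (ha : ∀ n, 0 ≤ a n)
    (hlow : ∀ n < d, a n ≤ q n)
    (hrec : ∀ n, a (d + n) ≤ q (d + n) + ∑ p ∈ antidiagonal n, a p.1 * a p.2)
    (hq : 0 < hradius q) : 0 < hradius a := by
  obtain ⟨s, hs, hsum⟩ := hradius_pos_iff.1 hq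
  set Q := ∑' n, |q n| * s ^ n
  have hQ : 0 ≤ Q := tsum_nonneg fun n => by positivity
  obtain ⟨t, ht, hts, htQ⟩ : ∃ t : ℝ, 0 < t ∧ t ≤ s ∧ t * (Q + 1) ^ 2 ≤ 1 :=
    ⟨min s (1 / (Q + 1) ^ 2), by positivity, min_le_left _ _,
      (le_div_iff₀ (by positivity)).1 (min_le_right _ _)⟩
  have ht1 : t ≤ 1 :=
    (le_mul_of_one_le_right ht.le (one_le_pow₀ (by linarith))).trans htQ
  have hat (n : ℕ) : 0 ≤ a n * t ^ n := mul_nonneg (ha n) (by positivity)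
  have hqt (N : ℕ) : ∑ n ∈ range N, q n * t ^ n ≤ Q :=
    calc ∑ n ∈ range N, q n * t ^ n ≤ ∑ n ∈ range N, |q n| * s ^ n := by
          gcongr with n
          exact le_abs_self (q n)
      _ ≤ Q := hsum.sum_le_tsum _ fun n _ => by positivity
  have hbound (N : ℕ) : ∑ n ∈ range N, a n * t ^ n ≤ Q + 1 := by
    induction N with
    | zero =>
      rw [sum_range_zero]
      positivity
    | succ N ih =>
      calc ∑ n ∈ range (N + 1), a n * t ^ n
          ≤ ∑ n ∈ range (d + N), a n * t ^ n :=
            sum_le_sum_of_subset_of_nonneg (range_subset_range.2 (by lia)) fun n _ _ => hat n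
        _ ≤ ∑ n ∈ range (d + N), q n * t ^ n + t ^ d * (∑ n ∈ range N, a n * t ^ n) ^ 2 :=
            sum_range_mul_pow_le_of_le_add_convolution ha hlow hrec ht.le N
        _ ≤ Q + t * (Q + 1) ^ 2 := by
            gcongr
            · exact hqt _
            · exact pow_le_of_le_one ht.le ht1 hd
            · exact sum_nonneg fun n _ => hat n
        _ ≤ Q + 1 := by gcongr
  refine hradius_pos_iff.2 ⟨t, ht, ?_⟩
  simpa only [abs_of_nonneg (ha _)] using summable_of_sum_range_le hat hbound

end Radius

lemma decompose_mem_iSup {ι κ R M : Type*} [DecidableEq ι] [Semiring R] [AddCommMonoid M]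
    [Module R M] (ℳ : ι → Submodule R M) [DirectSum.Decomposition ℳ] {W : κ → Submodule R M}
    {deg : κ → ι} (hW : ∀ p, W p ≤ ℳ (deg p)) {y : M} (hy : y ∈ ⨆ p, W p) (n : ι) :
    (DirectSum.decompose ℳ y n : M) ∈ ⨆ (p) (_ : deg p = n), W p := by
  induction hy using Submodule.iSup_induction' with
  | mem p y hy =>
    by_cases hp : deg p = n
    · subst hp
      rw [DirectSum.decompose_of_mem_same ℳ (hW p hy)]
      exact Submodule.mem_iSup_of_mem p (Submodule.mem_iSup_of_mem rfl hy)
    · rw [DirectSum.decompose_of_mem_ne ℳ (hW p hy) hp]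
      exact zero_mem _
  | zero => simp
  | add y z _ _ hy hz => simpa using add_mem hy hz

lemma finrank_finsetSup_le {ι K V : Type*} [DivisionRing K] [AddCommGroup V] [Module K V]
    (s : Finset ι) (W : ι → Submodule K V) [∀ i, FiniteDimensional K (W i)] :
    finrank K ↥(s.sup W) ≤ ∑ i ∈ s, finrank K (W i) := by
  classical
  induction s using Finset.induction_on with
  | empty => simp
  | insert i s hi ih =>
    rw [sup_insert, sum_insert hi]
    exact (Submodule.finrank_add_le_finrank_add_finrank _ _).trans (by gcongr)

section Mul

variable {K B : Type*} [Field K] [Ring B] [Algebra K B] (M N : Submodule K B)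
  [FiniteDimensional K M] [FiniteDimensional K N]

instance finiteDimensional_mul : FiniteDimensional K ↥(M * N) := by
  rw [← Submodule.mulMap_range]
  infer_instance

lemma finrank_mul_le : finrank K ↥(M * N) ≤ finrank K M * finrank K N := by
  rw [← Submodule.mulMap_range, ← finrank_tensorProduct]
  exact LinearMap.finrank_range_le _

lemma finrank_mul_span_singleton_mul_le (x : B) :
    finrank K ↥(M * Submodule.span K {x} * N) ≤ finrank K M * finrank K N :=
  calc finrank K ↥(M * Submodule.span K {x} * N)
      ≤ finrank K M * finrank K (Submodule.span K {x}) * finrank K N :=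
        (finrank_mul_le _ N).trans (Nat.mul_le_mul_right _ (finrank_mul_le M _))
    _ ≤ finrank K M * 1 * finrank K N := by
        gcongr
        exact (finrank_span_le_card {x}).trans (by simp)
    _ = finrank K M * finrank K N := by rw [mul_one]

end Mul

section Ideal

variable {k A : Type} [Field k] [Ring A] [Algebra k A]

lemma idealGen_eq_top_mul_span_mul_top (S : Set A) :
    idealGen k S = ⊤ * Submodule.span k S * ⊤ := by
  rw [← Submodule.span_univ, Submodule.span_mul_span, Submodule.span_mul_span, idealGen]
  congr 1
  ext y
  simp only [Set.mem_mul, Set.mem_univ, true_and, Set.mem_ofPred_eq]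
  grind

lemma isTwoSidedSub_idealGen (S : Set A) : IsTwoSidedSub (idealGen k S) := by
  have hleft : ⊤ * idealGen k S ≤ idealGen k S := by
    rw [idealGen_eq_top_mul_span_mul_top, ← mul_assoc, ← mul_assoc]
    gcongr
    exact le_top
  have hright : idealGen k S * ⊤ ≤ idealGen k S := by
    rw [idealGen_eq_top_mul_span_mul_top, mul_assoc]
    gcongr
    exact le_top
  exact fun a y hy => ⟨hleft (Submodule.mul_mem_mul Submodule.mem_top hy),
    hright (Submodule.mul_mem_mul hy Submodule.mem_top)⟩

lemma subset_idealGen (S : Set A) : S ⊆ idealGen k S :=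
  fun x hx => Submodule.subset_span ⟨1, 1, x, hx, by simp⟩

variable (𝒜 : ℕ → Submodule k A)

lemma finrank_le_quotDim_add_finrank (I W : Submodule k A) [FiniteDimensional k W] {n : ℕ}
    [FiniteDimensional k (𝒜 n)] (hW : 𝒜 n ⊓ I ≤ W) :
    finrank k (𝒜 n) ≤ quotDim k 𝒜 I n + finrank k W := by
  have hcomap : finrank k (I.comap (𝒜 n).subtype) ≤ finrank k W := by
    rw [← Submodule.finrank_map_subtype_eq, Submodule.map_comap_subtype]
    exact Submodule.finrank_mono hW
  rw [quotDim, ← Submodule.finrank_quotient_add_finrank (I.comap (𝒜 n).subtype)]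
  gcongr

variable [GradedAlgebra 𝒜] {S : Set A} {d : ℕ}

lemma idealGen_eq_iSup : idealGen k S =
    ⨆ p : ℕ × ℕ, 𝒜 p.1 * Submodule.span k S * 𝒜 p.2 := by
  rw [idealGen_eq_top_mul_span_mul_top,
    ← (DirectSum.Decomposition.isInternal 𝒜).submodule_iSup_eq_top, Submodule.mul_iSup]
  simp only [Submodule.iSup_mul]
  rw [iSup_comm, iSup_prod]

lemma mul_span_mul_le (hS : S ⊆ 𝒜 d) (p : ℕ × ℕ) :
    𝒜 p.1 * Submodule.span k S * 𝒜 p.2 ≤ 𝒜 (d + (p.1 + p.2)) := by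
  rw [show d + (p.1 + p.2) = p.1 + d + p.2 by lia]
  refine Submodule.mul_le.2 fun u hu b hb => SetLike.mul_mem_graded ?_ hb
  refine Submodule.mul_le.2 (fun a ha y hy => SetLike.mul_mem_graded ha ?_) hu
  exact Submodule.span_le.2 hS hy

lemma decompose_mem_of_mem_idealGen (hS : S ⊆ 𝒜 d) {y : A} (hy : y ∈ idealGen k S) (n : ℕ) :
    (DirectSum.decompose 𝒜 y n : A) ∈
      ⨆ (p : ℕ × ℕ) (_ : d + (p.1 + p.2) = n), 𝒜 p.1 * Submodule.span k S * 𝒜 p.2 :=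
  decompose_mem_iSup 𝒜 (mul_span_mul_le 𝒜 hS) (idealGen_eq_iSup 𝒜 ▸ hy) n

lemma isHomogSub_idealGen (hS : S ⊆ 𝒜 d) : IsHomogSub 𝒜 (idealGen k S) := by
  intro y hy n
  rw [idealGen_eq_iSup 𝒜]
  exact SetLike.le_def.1 (iSup₂_le_iSup _ _) (decompose_mem_of_mem_idealGen 𝒜 hS hy n)

lemma inf_idealGen_le (hS : S ⊆ 𝒜 d) (n : ℕ) : 𝒜 n ⊓ idealGen k S ≤
    ⨆ (p : ℕ × ℕ) (_ : d + (p.1 + p.2) = n), 𝒜 p.1 * Submodule.span k S * 𝒜 p.2 := by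
  rintro y ⟨hyn, hy⟩
  simpa only [DirectSum.decompose_of_mem_same 𝒜 hyn] using
    decompose_mem_of_mem_idealGen 𝒜 hS hy n

lemma finrank_le_quotDim_idealGen_of_lt (hS : S ⊆ 𝒜 d) {n : ℕ} [FiniteDimensional k (𝒜 n)]
    (hn : n < d) : finrank k (𝒜 n) ≤ quotDim k 𝒜 (idealGen k S) n := by
  have hbot : 𝒜 n ⊓ idealGen k S ≤ ⊥ :=
    (inf_idealGen_le 𝒜 hS n).trans (iSup₂_le fun p hp => by lia)
  simpa only [finrank_bot, add_zero] using finrank_le_quotDim_add_finrank 𝒜 _ ⊥ hbot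

variable [∀ n, FiniteDimensional k (𝒜 n)]

lemma finrank_le_quotDim_idealGen_singleton_add {x : A} (hx : x ∈ 𝒜 d) (n : ℕ) :
    finrank k (𝒜 (d + n)) ≤ quotDim k 𝒜 (idealGen k {x}) (d + n) +
      ∑ p ∈ antidiagonal n, finrank k (𝒜 p.1) * finrank k (𝒜 p.2) := by
  set W : ℕ × ℕ → Submodule k A := fun p => 𝒜 p.1 * Submodule.span k {x} * 𝒜 p.2
  have hle : 𝒜 (d + n) ⊓ idealGen k {x} ≤ (antidiagonal n).sup W := by
    refine (inf_idealGen_le 𝒜 (Set.singleton_subset_iff.2 hx) _).trans (iSup₂_le fun p hp => ?_)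
    exact le_sup (f := W) (mem_antidiagonal.2 (Nat.add_left_cancel hp))
  calc finrank k (𝒜 (d + n))
      ≤ quotDim k 𝒜 (idealGen k {x}) (d + n) + finrank k ↥((antidiagonal n).sup W) :=
        finrank_le_quotDim_add_finrank 𝒜 _ _ hle
    _ ≤ _ := by
        gcongr
        exact (finrank_finsetSup_le _ W).trans
          (sum_le_sum fun p _ => finrank_mul_span_singleton_mul_le _ _ x)

lemma hradius_finrank_pos_of_hradius_quotDim_pos (hd : d ≠ 0) {x : A} (hx : x ∈ 𝒜 d)
    (hquot : 0 < hradius fun n => (quotDim k 𝒜 (idealGen k {x}) n : ℝ)) :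
    0 < hradius fun n => (finrank k (𝒜 n) : ℝ) := by
  refine hradius_pos_of_le_add_convolution hd (fun n => Nat.cast_nonneg _) (fun n hn => ?_)
    (fun n => ?_) hquot
  · exact_mod_cast finrank_le_quotDim_idealGen_of_lt 𝒜 (Set.singleton_subset_iff.2 hx) hn
  · exact_mod_cast finrank_le_quotDim_idealGen_singleton_add 𝒜 hx n

end Ideal

namespace Extremal

variable {k A : Type} [Field k] [Ring A] [Algebra k A] [Nontrivial A]
  {𝒜 : ℕ → Submodule k A} [GradedAlgebra 𝒜]

lemma hradius_lt_top (hext : Extremal 𝒜) : hradius (fun n => (finrank k (𝒜 n) : ℝ)) < ⊤ :=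
  lt_top_of_lt <| hext ⊤ (fun _ _ _ => ⟨trivial, trivial⟩) (fun _ _ _ => trivial) top_ne_bot

lemma exists_mem_ne_zero (hext : Extremal 𝒜) : ∃ d ≠ 0, ∃ x ∈ 𝒜 d, x ≠ 0 := by
  by_contra! hzero
  refine hext.hradius_lt_top.ne (hradius_eq_top_of_hasFiniteSupport ?_)
  refine (Set.finite_singleton 0).subset fun n hn => ?_
  by_contra hn0
  have hbot : 𝒜 n = ⊥ := (Submodule.eq_bot_iff _).2 (hzero n hn0)
  have hrank : finrank k (𝒜 n) = 0 := by rw [hbot, finrank_bot]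
  exact hn (Nat.cast_eq_zero.2 hrank)

end Extremal

/-- **Proposition 5.3**: if `A` is a nonzero extremal graded algebra then
`0 < r(A) < ∞`. -/
theorem stmt8 {k A : Type} [Field k] [Ring A] [Algebra k A] [Nontrivial A]
    (𝒜 : ℕ → Submodule k A) [GradedAlgebra 𝒜]
    [hfd : ∀ n, FiniteDimensional k (𝒜 n)]
    (hext : Extremal 𝒜) :
    0 < hradius (fun n => (Module.finrank k (𝒜 n) : ℝ)) ∧
    hradius (fun n => (Module.finrank k (𝒜 n) : ℝ)) < ⊤ := by
  obtain ⟨d, hd, x, hx, hx0⟩ := hext.exists_mem_ne_zero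
  have hxI : x ∈ idealGen k {x} := subset_idealGen {x} rfl
  have hquot := hext (idealGen k {x}) (isTwoSidedSub_idealGen {x})
    (isHomogSub_idealGen 𝒜 (Set.singleton_subset_iff.2 hx))
    ((Submodule.ne_bot_iff _).2 ⟨x, hxI, hx0⟩)
  exact ⟨hradius_finrank_pos_of_hradius_quotDim_pos 𝒜 hd hx (pos_of_gt hquot),
    hext.hradius_lt_top⟩
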